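/- arXiv:2603.27802 — 6 statements merged into one kernel-verified Lean document; each statement's English description precedes it below -/
import Mathlib

section
/- Let c > 0, g ∈ ℂ, and let b : (-∞,0] → ℂ be continuous such that y ↦ e^{c y} b(y) is integrable on (-∞,0]. Suppose u : (-∞,0] → ℂ is twice continuously differentiable and satisfies u''(y) - c² u(y) = b(y) for all y ≤ 0, u(0) = g, u(y) → 0 as y → -∞, and u' is bounded on (-∞,0]. Then u'(0) = c·g + ∫_{-∞}^{0} e^{c y} b(y) dy. -/
open MeasureTheory Filter Set

/-!
Factor `∂² - c² = (∂ + c)(∂ - c)` and multiply by the integrating factor `e^{cy}`: the flux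
`F = e^{cy} (u' - c u)` satisfies `F' = e^{cy} b`, so the formula is the fundamental theorem of
calculus for `F`, once `F → 0` at `-∞`. Integrability of `F'` gives `F → L` for some `L`. Since
`G = e^{cy} u` tends to `0`, its derivative `G' = F + 2c G` also tends to `L`; but the derivative of
a convergent function can only converge to `0`, so `L = 0`.
-/

section

variable {E : Type*} [NormedAddCommGroup E] [NormedSpace ℝ E]

theorem eq_zero_of_tendsto_atBot_of_tendsto_deriv_atBot {f f' : ℝ → E} {l m : E}
    (hderiv : ∀ᶠ y in atBot, HasDerivAt f (f' y) y)
    (hf : Tendsto f atBot (nhds l)) (hf' : Tendsto f' atBot (nhds m)) : m = 0 := by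
  refine norm_le_zero_iff.mp (le_of_forall_pos_le_add fun ε hε => ?_)
  have hclose : ∀ᶠ y in atBot, ‖f' y - m‖ ≤ ε := by
    filter_upwards [hf' (Metric.closedBall_mem_nhds m hε)] with y hy
    exact mem_closedBall_iff_norm.mp hy
  obtain ⟨y₀, hy₀⟩ := eventually_atBot.mp (hderiv.and hclose)
  have hstep : ∀ y ≤ y₀, ‖f y - f (y - 1) - m‖ ≤ ε := fun y hy => by
    have hsub (x : ℝ) (hx : x ∈ Iic y₀) :
        HasDerivWithinAt (fun x => f x - x • m) (f' x - m) (Iic y₀) x := by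
      simpa using ((hy₀ x hx).1.fun_sub ((hasDerivAt_id' x).smul_const m)).hasDerivWithinAt
    have hmvt := (convex_Iic y₀).norm_image_sub_le_of_norm_hasDerivWithin_le hsub
      (fun x hx => (hy₀ x hx).2) (show y - 1 ∈ Iic y₀ from (sub_one_lt y).le.trans hy) hy
    calc ‖f y - f (y - 1) - m‖ = ‖f y - y • m - (f (y - 1) - (y - 1) • m)‖ := by
          congr 1; module
      _ ≤ ε := by simpa using hmvt
  have hlim : Tendsto (fun y => ‖f y - f (y - 1) - m‖) atBot (nhds ‖m‖) := by
    have hshift : Tendsto (fun y : ℝ => y - 1) atBot atBot :=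
      tendsto_atBot_add_const_right _ (-1) tendsto_id
    simpa using ((hf.sub (hf.comp hshift)).sub_const m).norm
  simpa using le_of_tendsto hlim (eventually_atBot.mpr ⟨y₀, hstep⟩)

theorem hasDerivWithinAt_exp_mul_smul (c : ℝ) {f : ℝ → E} {f' : E} {s : Set ℝ} {y : ℝ}
    (hf : HasDerivWithinAt f f' s y) :
    HasDerivWithinAt (fun y => Real.exp (c * y) • f y) (Real.exp (c * y) • (f' + c • f y)) s y := by
  have hexp : HasDerivAt (fun y => Real.exp (c * y)) (Real.exp (c * y) * c) y :=
    (hasDerivAt_const_mul c).exp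
  refine (hexp.hasDerivWithinAt.smul hf).congr_deriv ?_
  module

variable {c a : ℝ} {b u u' : ℝ → E}

theorem hasDerivWithinAt_exp_mul_smul_deriv_sub {s : Set ℝ} {y : ℝ}
    (hu : HasDerivWithinAt u (u' y) s y)
    (hu' : HasDerivWithinAt u' (c ^ 2 • u y + b y) s y) :
    HasDerivWithinAt (fun y => Real.exp (c * y) • (u' y - c • u y))
      (Real.exp (c * y) • b y) s y := by
  refine (hasDerivWithinAt_exp_mul_smul c (hu'.sub (hu.const_smul c))).congr_deriv ?_
  simp only [Pi.sub_apply, Pi.smul_apply]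
  module

theorem tendsto_exp_mul_smul_deriv_sub_atBot [CompleteSpace E]
    (hb : IntegrableOn (fun y => Real.exp (c * y) • b y) (Iic a))
    (hu : ∀ y < a, HasDerivAt u (u' y) y)
    (hu' : ∀ y < a, HasDerivAt u' (c ^ 2 • u y + b y) y)
    (hdecay : Tendsto (fun y => Real.exp (c * y) • u y) atBot (nhds 0)) :
    Tendsto (fun y => Real.exp (c * y) • (u' y - c • u y)) atBot (nhds 0) := by
  set F : ℝ → E := fun y => Real.exp (c * y) • (u' y - c • u y)
  set G : ℝ → E := fun y => Real.exp (c * y) • u y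
  have hF_deriv : ∀ y < a, HasDerivAt F (Real.exp (c * y) • b y) y := fun y hy =>
    hasDerivWithinAt_univ.mp (hasDerivWithinAt_exp_mul_smul_deriv_sub
      (hu y hy).hasDerivWithinAt (hu' y hy).hasDerivWithinAt)
  have hG_deriv : ∀ y < a, HasDerivAt G (F y + (2 * c) • G y) y := fun y hy => by
    refine (hasDerivWithinAt_univ.mp (hasDerivWithinAt_exp_mul_smul c
      (hu y hy).hasDerivWithinAt)).congr_deriv ?_
    module
  have hF_lim : Tendsto F atBot (nhds (limUnder atBot F)) :=
    have ha : a - 1 < a := sub_one_lt a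
    tendsto_limUnder_of_hasDerivAt_of_integrableOn_Iic (fun y hy => hF_deriv y (hy.trans_lt ha))
      (hb.mono_set (Iic_subset_Iic.mpr ha.le))
  have hG'_lim : Tendsto (fun y => F y + (2 * c) • G y) atBot (nhds (limUnder atBot F)) := by
    simpa using hF_lim.add (hdecay.const_smul (2 * c))
  have hL : limUnder atBot F = 0 := eq_zero_of_tendsto_atBot_of_tendsto_deriv_atBot
    ((eventually_lt_atBot a).mono hG_deriv) hdecay hG'_lim
  rwa [hL] at hF_lim

theorem dirichlet_to_neumann_mode_general [CompleteSpace E]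
    (hb : IntegrableOn (fun y => Real.exp (c * y) • b y) (Iic a))
    (hu : ∀ y ∈ Iic a, HasDerivWithinAt u (u' y) (Iic a) y)
    (hu' : ∀ y ∈ Iic a, HasDerivWithinAt u' (c ^ 2 • u y + b y) (Iic a) y)
    (hdecay : Tendsto (fun y => Real.exp (c * y) • u y) atBot (nhds 0)) :
    Real.exp (c * a) • (u' a - c • u a) = ∫ y in Iic a, Real.exp (c * y) • b y := by
  have hflux_deriv (y : ℝ) (hy : y ∈ Iic a) :=
    hasDerivWithinAt_exp_mul_smul_deriv_sub (hu y hy) (hu' y hy)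
  have hflux_lim := tendsto_exp_mul_smul_deriv_sub_atBot hb
    (fun y hy => (hu y hy.le).hasDerivAt (Iic_mem_nhds hy))
    (fun y hy => (hu' y hy.le).hasDerivAt (Iic_mem_nhds hy)) hdecay
  have hFTC := integral_Iic_of_hasDerivAt_of_tendsto
    (hflux_deriv a self_mem_Iic).continuousWithinAt
    (fun y hy => (hflux_deriv y (Iio_subset_Iic_self hy)).hasDerivAt (Iic_mem_nhds hy))
    hb hflux_lim
  rw [hFTC, sub_zero]

end

/-- Single Fourier-mode Dirichlet-to-Neumann formula for the Poisson problem on the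
half-line `(-∞,0]`: if `u'' - c² u = b`, `u(0) = g`, `u → 0` at `-∞` and `u'` bounded,
then `u'(0) = c g + ∫_{-∞}^0 e^{c y} b(y) dy`. -/
theorem dirichlet_to_neumann_mode
    (c : ℝ) (hc : 0 < c) (g : ℂ) (b u u' u'' : ℝ → ℂ)
    (hb_cont : ContinuousOn b (Iic 0))
    (hb_int : IntegrableOn (fun y => (Real.exp (c * y) : ℂ) * b y) (Iic 0))
    (hderiv1 : ∀ y ∈ Iic (0 : ℝ), HasDerivWithinAt u (u' y) (Iic 0) y)
    (hderiv2 : ∀ y ∈ Iic (0 : ℝ), HasDerivWithinAt u' (u'' y) (Iic 0) y)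
    (hcont2 : ContinuousOn u'' (Iic 0))
    (hODE : ∀ y ∈ Iic (0 : ℝ), u'' y - (c : ℂ) ^ 2 * u y = b y)
    (hbc : u 0 = g)
    (hdecay : Tendsto u atBot (nhds 0))
    (hbound : ∃ M, ∀ y ∈ Iic (0 : ℝ), ‖u' y‖ ≤ M) :
    u' 0 = (c : ℂ) * g + ∫ y in Iic (0 : ℝ), (Real.exp (c * y) : ℂ) * b y := by
  have hu'' (y : ℝ) (hy : y ∈ Iic 0) : HasDerivWithinAt u' (c ^ 2 • u y + b y) (Iic 0) y :=
    (hderiv2 y hy).congr_deriv (by simp [← hODE y hy])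
  have hweighted : Tendsto (fun y => Real.exp (c * y) • u y) atBot (nhds 0) := by
    simpa using (Real.tendsto_exp_atBot.comp (tendsto_id.const_mul_atBot hc)).smul hdecay
  simpa [hbc, sub_eq_iff_eq_add'] using
    dirichlet_to_neumann_mode_general (by simpa using hb_int) hderiv1 hu'' hweighted
end

section
/- Let c > 0, g ∈ ℂ, and let b : (-∞,0] → ℂ be continuous and integrable on (-∞,0]. Define u(y) := (g + (1/(2c)) ∫_{-∞}^{0} e^{c s} b(s) ds)·e^{c y} - (1/(2c)) ∫_{-∞}^{0} e^{-c|y-s|} b(s) ds for y ≤ 0. Then u is twice continuously differentiable on (-∞,0], satisfies u''(y) - c² u(y) = b(y) for all y ≤ 0, u(0) = g, u(y) → 0 as y → -∞, u' is bounded on (-∞,0], and u'(0) = c·g + ∫_{-∞}^{0} e^{c s} b(s) ds. -/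
open MeasureTheory Filter Set

/-!
The operator factors as `∂² - c² = (∂ - c)(∂ + c)`. Splitting the potential
`P y = ∫_{-∞}^a e^{-c|y-s|} b(s) ds` at `s = y` as `P = L + R` gives the first-order equations
`L' = b - c L` and `R' = c R - b`, hence `P' = c (R - L)` and `(R - L)' = c P - 2 b`. So `-P / (2c)`
is a particular solution, and adding the decaying homogeneous solution `e^{c(y-a)}` with the right
coefficient corrects the Dirichlet datum. Boundedness of `P'` comes from `|L| + |R| ≤ ‖b‖₁`, and
decay of `P` from dominated convergence.
-/

section FundamentalTheorem

variable {E : Type*} [NormedAddCommGroup E] [NormedSpace ℝ E] [CompleteSpace E]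
  {f : ℝ → E} {a y : ℝ}

theorem hasDerivWithinAt_intervalIntegral_left_Iic (hf : ContinuousOn f (Iic a)) (hy : y ≤ a) :
    HasDerivWithinAt (fun x => ∫ s in x..a, f s) (-f y) (Iic a) y := by
  have extend_continuous : Continuous fun s => f (min s a) :=
    hf.comp_continuous (by fun_prop) fun s => min_le_right s a
  have integral_eq : ∀ x ∈ Iic a, ∫ s in x..a, f s = ∫ s in x..a, f (min s a) := fun x hx =>
    intervalIntegral.integral_congr fun s hs => by
      rw [uIcc_of_le hx] at hs
      simp only [min_eq_left hs.2]
  have extend_deriv : HasDerivAt (fun x => ∫ s in x..a, f (min s a)) (-f (min y a)) y :=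
    intervalIntegral.integral_hasDerivAt_left (extend_continuous.intervalIntegrable y a)
      (extend_continuous.stronglyMeasurableAtFilter _ _) extend_continuous.continuousAt
  rw [min_eq_left hy] at extend_deriv
  exact extend_deriv.hasDerivWithinAt.congr integral_eq (integral_eq y hy)

theorem hasDerivWithinAt_setIntegral_Iic (hf : ContinuousOn f (Iic a))
    (hfi : IntegrableOn f (Iic a)) (hy : y ≤ a) :
    HasDerivWithinAt (fun x => ∫ s in Iic x, f s) (f y) (Iic a) y := by
  have integral_eq : ∀ x ∈ Iic a,
      ∫ s in Iic x, f s = (∫ s in Iic a, f s) - ∫ s in x..a, f s := fun x hx => by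
    rw [← intervalIntegral.integral_Iic_sub_Iic (hfi.mono_set (Iic_subset_Iic.2 hx)) hfi,
      sub_sub_cancel]
  simpa only [neg_neg] using
    ((hasDerivWithinAt_intervalIntegral_left_Iic hf hy).const_sub _).congr integral_eq
      (integral_eq y hy)

end FundamentalTheorem

section ExponentialKernel

variable {c : ℂ}

theorem hasDerivAt_cexp_mul_ofReal_sub (c z : ℂ) (y : ℝ) :
    HasDerivAt (fun x : ℝ => Complex.exp (c * (x - z))) (c * Complex.exp (c * (y - z))) y := by
  have arg_deriv : HasDerivAt (fun x : ℝ => c * ((x : ℂ) - z)) (c * 1) y :=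
    (Complex.ofRealCLM.hasDerivAt.sub_const z).const_mul c
  exact arg_deriv.cexp.congr_deriv (by ring)

theorem norm_cexp_mul_sub_le_one (hc : 0 ≤ c.re) {x y : ℝ} (hxy : x ≤ y) :
    ‖Complex.exp (c * (x - y))‖ ≤ 1 := by
  rw [← Complex.ofReal_sub, Complex.norm_exp, Complex.re_mul_ofReal, Real.exp_le_one_iff]
  exact mul_nonpos_of_nonneg_of_nonpos hc (sub_nonpos.2 hxy)

theorem cexp_neg_mul_abs_sub_of_le (c : ℂ) {x y : ℝ} (hxy : x ≤ y) :
    Complex.exp (-(c * (|y - x| : ℝ))) = Complex.exp (c * (x - y)) := by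
  rw [abs_of_nonneg (sub_nonneg.2 hxy), Complex.ofReal_sub, ← mul_neg, neg_sub]

theorem norm_cexp_neg_mul_abs (c : ℂ) (t : ℝ) :
    ‖Complex.exp (-(c * (|t| : ℝ)))‖ = Real.exp (-(c.re * |t|)) := by
  rw [Complex.norm_exp, Complex.neg_re, Complex.re_mul_ofReal]

theorem norm_cexp_neg_mul_abs_le_one (hc : 0 ≤ c.re) (t : ℝ) :
    ‖Complex.exp (-(c * (|t| : ℝ)))‖ ≤ 1 := by
  rw [norm_cexp_neg_mul_abs, Real.exp_le_one_iff, neg_nonpos]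
  positivity

theorem tendsto_cexp_neg_mul_abs_sub_cocompact (hc : 0 < c.re) (s : ℝ) :
    Tendsto (fun y : ℝ => Complex.exp (-(c * (|y - s| : ℝ)))) (cocompact ℝ) (nhds 0) := by
  rw [tendsto_zero_iff_norm_tendsto_zero]
  simp only [norm_cexp_neg_mul_abs]
  exact Real.tendsto_exp_neg_atTop_nhds_zero.comp
    ((tendsto_dist_right_cocompact_atTop s).const_mul_atTop hc)

theorem tendsto_cexp_mul_sub_atBot (hc : 0 < c.re) (a : ℝ) :
    Tendsto (fun y : ℝ => Complex.exp (c * (y - a))) atBot (nhds 0) := by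
  refine ((tendsto_cexp_neg_mul_abs_sub_cocompact hc a).mono_left atBot_le_cocompact).congr' ?_
  filter_upwards [eventually_le_atBot a] with y hy
  rw [abs_sub_comm, cexp_neg_mul_abs_sub_of_le c hy]

end ExponentialKernel

theorem norm_integral_smul_le_integral_norm {α 𝕜 E : Type*} [MeasurableSpace α] {μ : Measure α}
    [NormedField 𝕜] [NormedAddCommGroup E] [NormedSpace ℝ E] [NormedSpace 𝕜 E]
    {k : α → 𝕜} {f : α → E} (hf : Integrable f μ) (hk : ∀ᵐ x ∂μ, ‖k x‖ ≤ 1) :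
    ‖∫ x, k x • f x ∂μ‖ ≤ ∫ x, ‖f x‖ ∂μ :=
  norm_integral_le_of_norm_le hf.norm <| hk.mono fun _ hx =>
    (norm_smul_le _ _).trans (mul_le_of_le_one_left (norm_nonneg _) hx)

section Potentials

variable {E : Type*} [NormedAddCommGroup E] [NormedSpace ℂ E] {c : ℂ} {a y : ℝ} {b : ℝ → E}

theorem integrable_cexp_neg_mul_abs_sub_smul {μ : Measure ℝ} (hc : 0 ≤ c.re)
    (hb : Integrable b μ) (y : ℝ) :
    Integrable (fun s => Complex.exp (-(c * (|y - s| : ℝ))) • b s) μ :=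
  hb.bdd_smul 1 (by fun_prop) (Eventually.of_forall fun s => norm_cexp_neg_mul_abs_le_one hc _)

theorem tendsto_integral_cexp_neg_mul_abs_sub_smul_cocompact {μ : Measure ℝ} (hc : 0 < c.re)
    (hb : Integrable b μ) :
    Tendsto (fun y : ℝ => ∫ s, Complex.exp (-(c * (|y - s| : ℝ))) • b s ∂μ) (cocompact ℝ)
      (nhds 0) := by
  have : (cocompact ℝ).IsCountablyGenerated := by
    rw [cocompact_eq_atBot_atTop]
    infer_instance
  rw [← integral_zero ℝ E (μ := μ)]
  refine tendsto_integral_filter_of_dominated_convergence (fun s => ‖b s‖)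
    (Eventually.of_forall fun y =>
      (integrable_cexp_neg_mul_abs_sub_smul hc.le hb y).aestronglyMeasurable)
    (Eventually.of_forall fun y => Eventually.of_forall fun s => ?_) hb.norm
    (Eventually.of_forall fun s => ?_)
  · exact (norm_smul_le _ _).trans
      (mul_le_of_le_one_left (norm_nonneg _) (norm_cexp_neg_mul_abs_le_one hc.le _))
  · simpa only [zero_smul] using
      (tendsto_cexp_neg_mul_abs_sub_cocompact hc s).smul_const (b s)

/-- The part of the potential `∫ e^{-c|y-s|} b(s) ds` coming from the sources `s ≤ y`. -/
noncomputable def leftPotential (c : ℂ) (b : ℝ → E) (y : ℝ) : E :=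
  ∫ s in Iic y, Complex.exp (c * (s - y)) • b s

/-- The part of the potential `∫ e^{-c|y-s|} b(s) ds` coming from the sources `y < s ≤ a`. It is an
oriented interval integral, so this reading is only meant for `y ≤ a`. -/
noncomputable def rightPotential (c : ℂ) (a : ℝ) (b : ℝ → E) (y : ℝ) : E :=
  ∫ s in y..a, Complex.exp (c * (y - s)) • b s

@[simp]
theorem rightPotential_self (c : ℂ) (a : ℝ) (b : ℝ → E) : rightPotential c a b a = 0 :=
  intervalIntegral.integral_same

theorem integral_Iic_cexp_neg_mul_abs_sub_smul (hc : 0 ≤ c.re) (hb : IntegrableOn b (Iic a))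
    (hy : y ≤ a) :
    ∫ s in Iic a, Complex.exp (-(c * (|y - s| : ℝ))) • b s =
      leftPotential c b y + rightPotential c a b y := by
  have integrable : IntegrableOn (fun s => Complex.exp (-(c * (|y - s| : ℝ))) • b s) (Iic a) :=
    integrable_cexp_neg_mul_abs_sub_smul hc hb y
  have left_eq : ∫ s in Iic y, Complex.exp (-(c * (|y - s| : ℝ))) • b s = leftPotential c b y :=
    setIntegral_congr_fun measurableSet_Iic fun s hs => by
      simp only [cexp_neg_mul_abs_sub_of_le c (mem_Iic.1 hs)]
  have right_eq :
      ∫ s in y..a, Complex.exp (-(c * (|y - s| : ℝ))) • b s = rightPotential c a b y :=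
    intervalIntegral.integral_congr fun s hs => by
      rw [uIcc_of_le hy] at hs
      simp only [abs_sub_comm y s, cexp_neg_mul_abs_sub_of_le c hs.1]
  rw [← left_eq, ← right_eq, ← intervalIntegral.integral_Iic_sub_Iic
    (integrable.mono_set (Iic_subset_Iic.2 hy)) integrable, add_sub_cancel]

theorem norm_leftPotential_add_norm_rightPotential_le (hc : 0 ≤ c.re)
    (hb : IntegrableOn b (Iic a)) (hy : y ≤ a) :
    ‖leftPotential c b y‖ + ‖rightPotential c a b y‖ ≤ ∫ s in Iic a, ‖b s‖ := by
  have hb_left : IntegrableOn b (Iic y) := hb.mono_set (Iic_subset_Iic.2 hy)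
  have left_le : ‖leftPotential c b y‖ ≤ ∫ s in Iic y, ‖b s‖ :=
    norm_integral_smul_le_integral_norm hb_left <|
      ae_restrict_of_forall_mem measurableSet_Iic fun s hs => norm_cexp_mul_sub_le_one hc hs
  have right_le : ‖rightPotential c a b y‖ ≤ ∫ s in y..a, ‖b s‖ := by
    rw [rightPotential, intervalIntegral.integral_of_le hy, intervalIntegral.integral_of_le hy]
    exact norm_integral_smul_le_integral_norm (hb.mono_set Ioc_subset_Iic_self) <|
      ae_restrict_of_forall_mem measurableSet_Ioc fun s hs => norm_cexp_mul_sub_le_one hc hs.1.le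
  calc ‖leftPotential c b y‖ + ‖rightPotential c a b y‖
      ≤ (∫ s in Iic y, ‖b s‖) + ∫ s in y..a, ‖b s‖ := add_le_add left_le right_le
    _ = ∫ s in Iic a, ‖b s‖ := by
      rw [← intervalIntegral.integral_Iic_sub_Iic hb_left.norm hb.norm, add_sub_cancel]

variable [CompleteSpace E]

theorem hasDerivWithinAt_leftPotential (hc : 0 ≤ c.re) (hb : ContinuousOn b (Iic a))
    (hbi : IntegrableOn b (Iic a)) (hy : y ≤ a) :
    HasDerivWithinAt (leftPotential c b) (b y - c • leftPotential c b y) (Iic a) y := by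
  have factor : ∀ x, leftPotential c b x = Complex.exp (-c * (x - a)) •
      ∫ s in Iic x, Complex.exp (c * (s - a)) • b s := fun x => by
    rw [leftPotential, ← integral_smul]
    congr! 2 with s
    rw [smul_smul, ← Complex.exp_add]
    ring_nf
  have integrand_integrable : IntegrableOn (fun s : ℝ => Complex.exp (c * (s - a)) • b s) (Iic a) :=
    hbi.bdd_smul 1 (by fun_prop) <|
      ae_restrict_of_forall_mem measurableSet_Iic fun s hs => norm_cexp_mul_sub_le_one hc hs
  have integral_deriv := hasDerivWithinAt_setIntegral_Iic
    (f := fun s : ℝ => Complex.exp (c * (s - a)) • b s) (ContinuousOn.smul (by fun_prop) hb)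
    integrand_integrable hy
  refine (((hasDerivAt_cexp_mul_ofReal_sub (-c) a y).hasDerivWithinAt.smul
    integral_deriv).congr (fun x _ => factor x) (factor y)).congr_deriv ?_
  rw [factor y, smul_smul, smul_smul, ← Complex.exp_add, neg_mul, neg_add_cancel, Complex.exp_zero,
    one_smul, neg_mul, neg_smul, ← sub_eq_add_neg]

theorem hasDerivWithinAt_rightPotential (c : ℂ) (hb : ContinuousOn b (Iic a)) (hy : y ≤ a) :
    HasDerivWithinAt (rightPotential c a b) (c • rightPotential c a b y - b y) (Iic a) y := by
  have factor : ∀ x, rightPotential c a b x = Complex.exp (c * (x - a)) •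
      ∫ s in x..a, Complex.exp (-c * (s - a)) • b s := fun x => by
    rw [rightPotential, ← intervalIntegral.integral_smul]
    congr! 2 with s
    rw [smul_smul, ← Complex.exp_add]
    ring_nf
  have integral_deriv := hasDerivWithinAt_intervalIntegral_left_Iic
    (f := fun s : ℝ => Complex.exp (-c * (s - a)) • b s) (ContinuousOn.smul (by fun_prop) hb) hy
  refine (((hasDerivAt_cexp_mul_ofReal_sub c a y).hasDerivWithinAt.smul
    integral_deriv).congr (fun x _ => factor x) (factor y)).congr_deriv ?_
  rw [factor y, smul_neg, smul_smul, smul_smul, ← Complex.exp_add, neg_mul, add_neg_cancel,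
    Complex.exp_zero, one_smul, neg_add_eq_sub]

theorem hasDerivWithinAt_leftPotential_add_rightPotential (hc : 0 ≤ c.re)
    (hb : ContinuousOn b (Iic a)) (hbi : IntegrableOn b (Iic a)) (hy : y ≤ a) :
    HasDerivWithinAt (fun x => leftPotential c b x + rightPotential c a b x)
      (c • (rightPotential c a b y - leftPotential c b y)) (Iic a) y :=
  ((hasDerivWithinAt_leftPotential hc hb hbi hy).add
    (hasDerivWithinAt_rightPotential c hb hy)).congr_deriv (by module)

theorem hasDerivWithinAt_rightPotential_sub_leftPotential (hc : 0 ≤ c.re)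
    (hb : ContinuousOn b (Iic a)) (hbi : IntegrableOn b (Iic a)) (hy : y ≤ a) :
    HasDerivWithinAt (fun x => rightPotential c a b x - leftPotential c b x)
      (c • (leftPotential c b y + rightPotential c a b y) - (2 : ℂ) • b y) (Iic a) y :=
  ((hasDerivWithinAt_rightPotential c hb hy).sub
    (hasDerivWithinAt_leftPotential hc hb hbi hy)).congr_deriv (by module)

end Potentials

section ModeSolution

variable {E : Type*} [NormedAddCommGroup E] [NormedSpace ℂ E] {c : ℂ} {a y : ℝ} {b : ℝ → E}

/-- The solutions of `u'' - c² u = b` on `(-∞, a]` that decay at `-∞` (when `Re c > 0`),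
parametrised by the coefficient `A` of the homogeneous solution `e^{c(y-a)}`. -/
noncomputable def modeSolution (c : ℂ) (a : ℝ) (b : ℝ → E) (A : E) (y : ℝ) : E :=
  Complex.exp (c * (y - a)) • A
    - (2 * c)⁻¹ • ∫ s in Iic a, Complex.exp (-(c * (|y - s| : ℝ))) • b s

/-- The derivative of `modeSolution c a b A` on `(-∞, a]`, written through the one-sided potentials
so that it can be differentiated once more. -/
noncomputable def modeSolutionDeriv (c : ℂ) (a : ℝ) (b : ℝ → E) (A : E) (y : ℝ) : E :=
  (c * Complex.exp (c * (y - a))) • A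
    - (2 : ℂ)⁻¹ • (rightPotential c a b y - leftPotential c b y)

theorem modeSolution_eq (hc : 0 ≤ c.re) (hb : IntegrableOn b (Iic a)) (A : E) (hy : y ≤ a) :
    modeSolution c a b A y = Complex.exp (c * (y - a)) • A
      - (2 * c)⁻¹ • (leftPotential c b y + rightPotential c a b y) := by
  rw [modeSolution, integral_Iic_cexp_neg_mul_abs_sub_smul hc hb hy]

theorem modeSolution_self (hc : 0 ≤ c.re) (hb : IntegrableOn b (Iic a)) (A : E) :
    modeSolution c a b A a = A - (2 * c)⁻¹ • leftPotential c b a := by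
  simp [modeSolution_eq hc hb A le_rfl]

theorem modeSolutionDeriv_self (c : ℂ) (a : ℝ) (b : ℝ → E) (A : E) :
    modeSolutionDeriv c a b A a = c • A + (2 : ℂ)⁻¹ • leftPotential c b a := by
  simp [modeSolutionDeriv]

theorem tendsto_modeSolution_atBot (hc : 0 < c.re) (hb : IntegrableOn b (Iic a)) (A : E) :
    Tendsto (modeSolution c a b A) atBot (nhds 0) := by
  have homogeneous_tendsto := (tendsto_cexp_mul_sub_atBot hc a).smul_const A
  have potential_tendsto := (tendsto_integral_cexp_neg_mul_abs_sub_smul_cocompact hc hb).mono_left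
    atBot_le_cocompact
  have difference_tendsto := homogeneous_tendsto.sub (potential_tendsto.const_smul (2 * c)⁻¹)
  rw [zero_smul, smul_zero, sub_zero] at difference_tendsto
  exact difference_tendsto

theorem norm_modeSolutionDeriv_le (hc : 0 ≤ c.re) (hb : IntegrableOn b (Iic a)) (A : E)
    (hy : y ≤ a) :
    ‖modeSolutionDeriv c a b A y‖ ≤ ‖c‖ * ‖A‖ + 2⁻¹ * ∫ s in Iic a, ‖b s‖ := by
  refine (norm_sub_le _ _).trans (add_le_add ?_ ?_)
  · rw [norm_smul, norm_mul]
    gcongr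
    exact mul_le_of_le_one_right (norm_nonneg c) (norm_cexp_mul_sub_le_one hc hy)
  · rw [norm_smul, norm_inv, Complex.norm_ofNat]
    gcongr
    calc ‖rightPotential c a b y - leftPotential c b y‖
        ≤ ‖leftPotential c b y‖ + ‖rightPotential c a b y‖ :=
          (norm_sub_le _ _).trans_eq (add_comm _ _)
      _ ≤ ∫ s in Iic a, ‖b s‖ := norm_leftPotential_add_norm_rightPotential_le hc hb hy

variable [CompleteSpace E]

theorem hasDerivWithinAt_modeSolution (hc : 0 ≤ c.re) (hc_ne : c ≠ 0)
    (hb : ContinuousOn b (Iic a)) (hbi : IntegrableOn b (Iic a)) (A : E) (hy : y ≤ a) :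
    HasDerivWithinAt (modeSolution c a b A) (modeSolutionDeriv c a b A y) (Iic a) y := by
  have homogeneous_deriv := ((hasDerivAt_cexp_mul_ofReal_sub c a y).smul_const A).hasDerivWithinAt
    (s := Iic a)
  have potential_deriv :=
    (hasDerivWithinAt_leftPotential_add_rightPotential hc hb hbi hy).const_smul (2 * c)⁻¹
  refine ((homogeneous_deriv.sub potential_deriv).congr (fun x hx => modeSolution_eq hc hbi A hx)
    (modeSolution_eq hc hbi A hy)).congr_deriv ?_
  rw [modeSolutionDeriv]
  match_scalars <;> field_simp

theorem hasDerivWithinAt_modeSolutionDeriv (hc : 0 ≤ c.re) (hc_ne : c ≠ 0)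
    (hb : ContinuousOn b (Iic a)) (hbi : IntegrableOn b (Iic a)) (A : E) (hy : y ≤ a) :
    HasDerivWithinAt (modeSolutionDeriv c a b A) (c ^ 2 • modeSolution c a b A y + b y)
      (Iic a) y := by
  have homogeneous_deriv :=
    (((hasDerivAt_cexp_mul_ofReal_sub c a y).const_mul c).smul_const A).hasDerivWithinAt
      (s := Iic a)
  have potential_deriv :=
    (hasDerivWithinAt_rightPotential_sub_leftPotential hc hb hbi hy).const_smul (2 : ℂ)⁻¹
  refine (homogeneous_deriv.sub potential_deriv).congr_deriv ?_
  rw [modeSolution_eq hc hbi A hy]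
  match_scalars <;> field_simp

end ModeSolution

theorem variation_of_constants_mode_general {E : Type*} [NormedAddCommGroup E] [NormedSpace ℂ E]
    [CompleteSpace E] {c : ℂ} (hc : 0 < c.re) {a : ℝ} (g : E) {b : ℝ → E}
    (hb_cont : ContinuousOn b (Iic a)) (hb_int : IntegrableOn b (Iic a)) {u : ℝ → E}
    (hu : ∀ y ≤ a, u y =
      Complex.exp (c * (y - a)) •
          (g + (2 * c)⁻¹ • ∫ s in Iic a, Complex.exp (c * (s - a)) • b s)
        - (2 * c)⁻¹ • ∫ s in Iic a, Complex.exp (-(c * (|y - s| : ℝ))) • b s) :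
    ∃ u' u'' : ℝ → E,
      (∀ y ∈ Iic a, HasDerivWithinAt u (u' y) (Iic a) y) ∧
      (∀ y ∈ Iic a, HasDerivWithinAt u' (u'' y) (Iic a) y) ∧
      ContinuousOn u'' (Iic a) ∧
      (∀ y ∈ Iic a, u'' y - c ^ 2 • u y = b y) ∧
      u a = g ∧
      Tendsto u atBot (nhds 0) ∧
      (∃ M, ∀ y ∈ Iic a, ‖u' y‖ ≤ M) ∧
      u' a = c • g + ∫ s in Iic a, Complex.exp (c * (s - a)) • b s := by
  set J : E := ∫ s in Iic a, Complex.exp (c * (s - a)) • b s with hJ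
  set A : E := g + (2 * c)⁻¹ • J with hA
  have hc_ne : c ≠ 0 := Complex.ne_zero_of_re_pos hc
  have u_eq : EqOn u (modeSolution c a b A) (Iic a) := hu
  have u_deriv : ∀ y ∈ Iic a, HasDerivWithinAt u (modeSolutionDeriv c a b A y) (Iic a) y :=
    fun y hy => (hasDerivWithinAt_modeSolution hc.le hc_ne hb_cont hb_int A hy).congr u_eq (u_eq hy)
  have u_cont : ContinuousOn u (Iic a) := fun y hy => (u_deriv y hy).continuousWithinAt
  refine ⟨modeSolutionDeriv c a b A, fun y => c ^ 2 • u y + b y, u_deriv, fun y hy => ?_,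
    (u_cont.const_smul _).add hb_cont, fun y _ => add_sub_cancel_left _ _, ?_, ?_,
    ⟨_, fun y hy => norm_modeSolutionDeriv_le hc.le hb_int A hy⟩, ?_⟩
  · simpa only [u_eq hy] using hasDerivWithinAt_modeSolutionDeriv hc.le hc_ne hb_cont hb_int A hy
  · rw [u_eq self_mem_Iic, modeSolution_self hc.le hb_int, hA, leftPotential, add_sub_cancel_right]
  · exact (tendsto_modeSolution_atBot hc hb_int A).congr' <|
      (eventually_le_atBot a).mono fun y hy => (u_eq hy).symm
  · rw [modeSolutionDeriv_self, hA, leftPotential, ← hJ]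
    match_scalars <;> field_simp
    norm_num

/-- Existence (variation of constants) for the single-mode problem `u'' - c² u = b`
on `(-∞,0]` with Dirichlet datum `g` and decay at `-∞`, together with the
Dirichlet-to-Neumann formula `u'(0) = c g + ∫_{-∞}^0 e^{c s} b(s) ds`. -/
theorem variation_of_constants_mode
    (c : ℝ) (hc : 0 < c) (g : ℂ) (b : ℝ → ℂ)
    (hb_cont : ContinuousOn b (Iic 0))
    (hb_int : IntegrableOn b (Iic 0))
    (u : ℝ → ℂ)
    (hu : ∀ y ≤ (0 : ℝ), u y =
      (g + ((1 / (2 * c) : ℝ) : ℂ) * ∫ s in Iic (0 : ℝ), (Real.exp (c * s) : ℂ) * b s) *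
          Complex.exp ((c : ℂ) * y)
        - ((1 / (2 * c) : ℝ) : ℂ) *
            ∫ s in Iic (0 : ℝ), (Real.exp (-(c * |y - s|)) : ℂ) * b s) :
    ∃ u' u'' : ℝ → ℂ,
      (∀ y ∈ Iic (0 : ℝ), HasDerivWithinAt u (u' y) (Iic 0) y) ∧
      (∀ y ∈ Iic (0 : ℝ), HasDerivWithinAt u' (u'' y) (Iic 0) y) ∧
      ContinuousOn u'' (Iic 0) ∧
      (∀ y ∈ Iic (0 : ℝ), u'' y - (c : ℂ) ^ 2 * u y = b y) ∧
      u 0 = g ∧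
      Tendsto u atBot (nhds 0) ∧
      (∃ M, ∀ y ∈ Iic (0 : ℝ), ‖u' y‖ ≤ M) ∧
      u' 0 = (c : ℂ) * g + ∫ s in Iic (0 : ℝ), (Real.exp (c * s) : ℂ) * b s := by
  simpa using variation_of_constants_mode_general (c := c) (a := 0) (by simpa using hc) g
    hb_cont hb_int fun y hy => by simp [hu y hy, mul_comm]
end

section
/- Let c : ℤ → ℂ be finitely supported with c(0) = 0, and define h : ℤ → ℂ by h(k) := -i·sgn(k)·c(k), where sgn(0) = 0 and sgn(k) = k/|k| for k ≠ 0. Then for every k ∈ ℤ, -i·sgn(k)·Σ_{m∈ℤ} c(k-m)·h(m) = (1/2)·Σ_{m∈ℤ} ( h(k-m)·h(m) - c(k-m)·c(m) ). -/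
/-!
The symbol `σ k = -i sgn k` of the Hilbert transform satisfies Cotlar's relation
`σ (a + b) (σ a + σ b) = σ a σ b - 1` for nonzero `a`, `b`. Multiplying by `c a * c b` and summing
over `a + b = k` gives the identity, because the two sums coming from `σ a + σ b` are exchanged by
the reflection `m ↦ k - m`.
-/

section Convolution

variable {G R : Type*} [AddCommGroup G] [TopologicalSpace R]

theorem hasSum_convolution_comm [NonUnitalNonAssocCommSemiring R] {f g : G → R} {k : G} {s : R} :
    HasSum (fun m ↦ f (k - m) * g m) s ↔ HasSum (fun m ↦ g (k - m) * f m) s := by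
  rw [← (Equiv.subLeft k).hasSum_iff]
  simp only [Function.comp_def, Equiv.subLeft_apply, sub_sub_cancel, mul_comm]

theorem hasSum_convolution_sub_of_cotlar [CommRing R] [IsTopologicalSemiring R] {σ c h : G → R}
    (hσ : ∀ a ∈ Function.support c, ∀ b ∈ Function.support c,
      σ (a + b) * (σ a + σ b) = σ a * σ b - 1)
    (hh : ∀ k, h k = σ k * c k) {k : G} {s : R} (hs : HasSum (fun m ↦ c (k - m) * h m) s) :
    HasSum (fun m ↦ h (k - m) * h m - c (k - m) * c m) (σ k * (s + s)) := by
  have pointwise (m : G) : h (k - m) * h m - c (k - m) * c m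
      = σ k * (c (k - m) * h m + h (k - m) * c m) := by
    by_cases hm : c m = 0
    · simp [hh, hm]
    by_cases hkm : c (k - m) = 0
    · simp [hh, hkm]
    have cotlar := hσ (k - m) hkm m hm
    rw [sub_add_cancel] at cotlar
    rw [hh m, hh (k - m)]
    linear_combination -(c (k - m) * c m) * cotlar
  simp only [pointwise]
  exact (hs.add (hasSum_convolution_comm.mp hs)).mul_left (σ k)

end Convolution

section Sign

variable {G : Type*} [AddCommGroup G] [LinearOrder G] [IsOrderedAddMonoid G]

theorem sign_add_mul_sign_add_sign (R : Type*) [Ring R] {a b : G} (ha : a ≠ 0) (hb : b ≠ 0) :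
    (SignType.sign (a + b) : R) * (SignType.sign a + SignType.sign b)
      = 1 + SignType.sign a * SignType.sign b := by
  rcases ha.lt_or_gt with ha | ha <;> rcases hb.lt_or_gt with hb | hb
  · simp [sign_neg ha, sign_neg hb, sign_neg (add_neg ha hb)]
  · simp [sign_neg ha, sign_pos hb]
  · simp [sign_pos ha, sign_neg hb]
  · simp [sign_pos ha, sign_pos hb, sign_pos (add_pos ha hb)]

theorem neg_I_mul_sign_cotlar {a b : G} (ha : a ≠ 0) (hb : b ≠ 0) :
    -Complex.I * SignType.sign (a + b) *
        (-Complex.I * SignType.sign a + -Complex.I * SignType.sign b)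
      = -Complex.I * SignType.sign a * (-Complex.I * SignType.sign b) - 1 := by
  linear_combination
    (SignType.sign (a + b) * (SignType.sign a + SignType.sign b)
      - SignType.sign a * SignType.sign b : ℂ) * Complex.I_sq - sign_add_mul_sign_add_sign ℂ ha hb

theorem tricomi_identity_coefficients_general {c h : G → ℂ} (hc0 : c 0 = 0)
    (hh : ∀ k, h k = -Complex.I * SignType.sign k * c k) {k : G}
    (hs : Summable fun m ↦ c (k - m) * h m) :
    -Complex.I * SignType.sign k * ∑' m, c (k - m) * h m
      = (1 / 2 : ℂ) * ∑' m, (h (k - m) * h m - c (k - m) * c m) := by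
  have ne_zero_of_mem_support {a : G} (ha : a ∈ Function.support c) : a ≠ 0 :=
    fun h0 ↦ ha (h0 ▸ hc0)
  have hasSum_sub := hasSum_convolution_sub_of_cotlar (σ := fun k ↦ -Complex.I * SignType.sign k)
    (fun _ ha _ hb ↦ neg_I_mul_sign_cotlar (ne_zero_of_mem_support ha) (ne_zero_of_mem_support hb))
    hh hs.hasSum
  rw [hasSum_sub.tsum_eq]
  ring

end Sign

/-- Tricomi identity `𝓗(f·𝓗f) = ((𝓗f)² - f²)/2` at the level of Fourier coefficients:
`c` is the coefficient sequence of a mean-zero trigonometric polynomial, `h` that of its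
Hilbert transform (symbol `-i sgn(k)`), and products become convolutions. -/
theorem tricomi_identity_coefficients
    (c h : ℤ → ℂ)
    (hc : (Function.support c).Finite)
    (hc0 : c 0 = 0)
    (hh : ∀ k : ℤ, h k = -Complex.I * ((Int.sign k : ℤ) : ℂ) * c k) :
    ∀ k : ℤ,
      -Complex.I * ((Int.sign k : ℤ) : ℂ) * ∑' m : ℤ, c (k - m) * h m
        = (1 / 2 : ℂ) * ∑' m : ℤ, (h (k - m) * h m - c (k - m) * c m) := by
  intro k
  have summable_convolution : Summable fun m ↦ c (k - m) * h m :=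
    summable_of_hasFiniteSupport (hc.subset fun m hm hcm ↦ hm (by simp [hh, hcm]))
  simp only [Int.sign_eq_sign, SignType.intCast_cast] at hh ⊢
  exact tricomi_identity_coefficients_general hc0 hh summable_convolution
end

section
/- Let C₀ > 0, C₁ ≥ 0, C₂ ≥ 0 and T > 0 satisfy T·(4·C₁·C₀ + 8·C₂·C₀²) < 1. Let Z : [0,T] → ℝ be continuous with Z(t) ≥ 0 and Z(t) ≤ C₀ + C₁·t·Z(t)² + C₂·t·Z(t)³ for all t ∈ [0,T]. Then Z(t) ≤ 2·C₀ for all t ∈ [0,T]. -/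
/-!
At time `0` the inequality gives `Z 0 ≤ C₀ < 2 * C₀`. If `Z` took the value `2 * C₀` at some time
`t ∈ [0, T]`, it would give `2 * C₀ ≤ C₀ * (1 + t * (4 * C₁ * C₀ + 8 * C₂ * C₀ ^ 2)) < 2 * C₀`.
So `2 * C₀` is a barrier which the continuous function `Z` starts below and cannot cross.
-/

open Set

theorem forall_lt_of_forall_le_of_barrier {X α : Type*} [TopologicalSpace X] [LinearOrder α]
    [TopologicalSpace α] [OrderClosedTopology α] {s : Set X} {f : X → α} {Φ : X → α → α} {m : α}
    (hs : IsPreconnected s) (hf : ContinuousOn f s) (hbelow : ∃ x ∈ s, f x < m)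
    (hle : ∀ x ∈ s, f x ≤ Φ x (f x)) (hbarrier : ∀ x ∈ s, Φ x m < m) : ∀ x ∈ s, f x < m := by
  have hne : ∀ x ∈ s, f x ≠ m := by
    rintro x hx rfl
    exact (hle x hx).not_gt (hbarrier x hx)
  exact fun x hx ↦ hs.gt_of_ne hf hne hbelow hx

theorem mul_lt_of_mem_Icc_of_mul_lt {R : Type*} [Ring R] [LinearOrder R] [IsOrderedRing R]
    {t T k b : R} (ht : t ∈ Icc 0 T) (hb : 0 < b) (hTk : T * k < b) : t * k < b := by
  rcases le_total 0 k with hk | hk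
  · exact (mul_le_mul_of_nonneg_right ht.2 hk).trans_lt hTk
  · exact (mul_nonpos_of_nonneg_of_nonpos ht.1 hk).trans_lt hb

theorem cubic_two_mul_lt_two_mul {R : Type*} [CommSemiring R] [PartialOrder R]
    [IsStrictOrderedRing R] {C₀ C₁ C₂ t : R} (hC₀ : 0 < C₀)
    (ht : t * (4 * C₁ * C₀ + 8 * C₂ * C₀ ^ 2) < 1) :
    C₀ + C₁ * t * (2 * C₀) ^ 2 + C₂ * t * (2 * C₀) ^ 3 < 2 * C₀ := by
  calc C₀ + C₁ * t * (2 * C₀) ^ 2 + C₂ * t * (2 * C₀) ^ 3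
      = C₀ + C₀ * (t * (4 * C₁ * C₀ + 8 * C₂ * C₀ ^ 2)) := by ring
    _ < C₀ + C₀ * 1 := by gcongr
    _ = 2 * C₀ := by ring

theorem cubic_bootstrap_general {C₀ C₁ C₂ T : ℝ} (hC₀ : 0 < C₀)
    (hsmall : T * (4 * C₁ * C₀ + 8 * C₂ * C₀ ^ 2) < 1) {Z : ℝ → ℝ}
    (hcont : ContinuousOn Z (Icc 0 T))
    (hineq : ∀ t ∈ Icc (0 : ℝ) T, Z t ≤ C₀ + C₁ * t * Z t ^ 2 + C₂ * t * Z t ^ 3) :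
    ∀ t ∈ Icc (0 : ℝ) T, Z t < 2 * C₀ := by
  intro t ht
  have h0 : (0 : ℝ) ∈ Icc 0 T := left_mem_Icc.2 (ht.1.trans ht.2)
  have hZ0_le : Z 0 ≤ C₀ := by simpa using hineq 0 h0
  have hZ0_lt : Z 0 < 2 * C₀ := by linarith
  have hbarrier : ∀ u ∈ Icc 0 T,
      C₀ + C₁ * u * (2 * C₀) ^ 2 + C₂ * u * (2 * C₀) ^ 3 < 2 * C₀ :=
    fun u hu ↦ cubic_two_mul_lt_two_mul hC₀ (mul_lt_of_mem_Icc_of_mul_lt hu one_pos hsmall)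
  exact forall_lt_of_forall_le_of_barrier (Φ := fun u z ↦ C₀ + C₁ * u * z ^ 2 + C₂ * u * z ^ 3)
    isPreconnected_Icc hcont ⟨0, h0, hZ0_lt⟩ hineq hbarrier t ht

/-- Continuity/bootstrap argument for the cubic polynomial inequality
`Z(t) ≤ C₀ + C₁ t Z(t)² + C₂ t Z(t)³`: if `T(4C₁C₀ + 8C₂C₀²) < 1` then `Z ≤ 2C₀` on `[0,T]`. -/
theorem cubic_bootstrap
    (C₀ C₁ C₂ T : ℝ) (hC₀ : 0 < C₀) (hC₁ : 0 ≤ C₁) (hC₂ : 0 ≤ C₂) (hT : 0 < T)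
    (hsmall : T * (4 * C₁ * C₀ + 8 * C₂ * C₀ ^ 2) < 1)
    (Z : ℝ → ℝ)
    (hcont : ContinuousOn Z (Set.Icc 0 T))
    (hpos : ∀ t ∈ Set.Icc (0 : ℝ) T, 0 ≤ Z t)
    (hineq : ∀ t ∈ Set.Icc (0 : ℝ) T, Z t ≤ C₀ + C₁ * t * Z t ^ 2 + C₂ * t * Z t ^ 3) :
    ∀ t ∈ Set.Icc (0 : ℝ) T, Z t ≤ 2 * C₀ :=
  fun t ht ↦ (cubic_bootstrap_general hC₀ hsmall hcont hineq t ht).le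
end

section
/- Let κ > 0 and C ≥ 0. Let E : [0,∞) → ℝ be differentiable with E(t) ≥ 0 for all t, and let D : [0,∞) → ℝ satisfy D(t) ≥ 0 for all t. Assume E'(t) + κ·D(t) ≤ C·√(E(t))·D(t) for all t ≥ 0 and C·√(E(0)) ≤ κ/2. Then E is nonincreasing on [0,∞); moreover E'(t) + (κ/2)·D(t) ≤ 0 and E(t) ≤ E(0) for all t ≥ 0. -/
/-!
Closing the estimate is a continuity argument: the sign of `E'` is known only while `E` stays
close to `E 0`, so `E` is first trapped below the lines `E 0 + ε t` of small slope `ε > 0`, which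
it cannot cross. Letting `ε → 0` gives `E ≤ E 0`, so the nonlinearity remains absorbed by the
dissipation for all time.
-/

open Set Filter Topology

theorem image_le_left_of_deriv_right_nonpos_of_mem_Ico {f f' : ℝ → ℝ} {a b M : ℝ}
    (hf : ContinuousOn f (Icc a b))
    (hf' : ∀ x ∈ Ico a b, HasDerivWithinAt f (f' x) (Ici x) x)
    (hM : f a < M) (hnonpos : ∀ x ∈ Ico a b, f x ∈ Ico (f a) M → f' x ≤ 0)
    ⦃x : ℝ⦄ (hx : x ∈ Icc a b) : f x ≤ f a := by
  have line_tendsto (y : ℝ) : Tendsto (fun ε ↦ f a + ε * (y - a)) (𝓝[>] 0) (𝓝 (f a)) :=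
    tendsto_nhdsWithin_of_tendsto_nhds <|
      Continuous.tendsto' (by fun_prop) _ _ (by simp)
  have le_line : ∀ᶠ ε in 𝓝[>] 0, f x ≤ f a + ε * (x - a) := by
    filter_upwards [(line_tendsto b).eventually_lt_const hM, self_mem_nhdsWithin]
      with ε line_lt (hε : 0 < ε)
    have line_deriv (y : ℝ) : HasDerivAt (fun y ↦ f a + ε * (y - a)) ε y := by
      simpa using (((hasDerivAt_id y).sub_const a).const_mul ε).const_add (f a)
    refine image_le_of_deriv_right_lt_deriv_boundary hf hf' (by simp) line_deriv
      (fun y hy hfy ↦ (hnonpos y hy ?_).trans_lt hε) hx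
    rw [hfy]
    have line_le : ε * (y - a) ≤ ε * (b - a) := by gcongr; exact hy.2.le
    exact ⟨le_add_of_nonneg_right (mul_nonneg hε.le (sub_nonneg.2 hy.1)), by linarith⟩
  exact ge_of_tendsto (line_tendsto x) le_line

section Absorption

variable {E E' D g : ℝ → ℝ} {a κ μ : ℝ}

theorem le_left_of_deriv_add_mul_le
    (hderiv : ∀ t ∈ Ici a, HasDerivWithinAt E (E' t) (Ici a) t)
    (hD : ∀ t ∈ Ici a, 0 ≤ D t)
    (hineq : ∀ t ∈ Ici a, E' t + κ * D t ≤ g (E t) * D t)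
    (hg : ContinuousWithinAt g (Ici (E a)) (E a)) (hsmall : g (E a) < κ)
    ⦃t : ℝ⦄ (ht : t ∈ Ici a) : E t ≤ E a := by
  obtain ⟨M, hM, g_lt⟩ : ∃ M ∈ Ioi (E a), Ico (E a) M ⊆ {s | g s < κ} :=
    mem_nhdsGE_iff_exists_Ico_subset.1 (hg.eventually_lt_const hsmall)
  refine image_le_left_of_deriv_right_nonpos_of_mem_Ico
    (fun x hx ↦ (hderiv x hx.1).continuousWithinAt.mono Icc_subset_Ici_self)
    (fun x hx ↦ (hderiv x hx.1).mono (Ici_subset_Ici.2 hx.1)) hM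
    (fun x hx hEx ↦ ?_) (right_mem_Icc.2 ht)
  have absorbed : g (E x) * D x ≤ κ * D x :=
    mul_le_mul_of_nonneg_right (g_lt hEx).le (hD x hx.1)
  linarith [hineq x hx.1]

theorem small_data_absorption_general (hμ : 0 < μ)
    (hderiv : ∀ t ∈ Ici a, HasDerivWithinAt E (E' t) (Ici a) t)
    (hD : ∀ t ∈ Ici a, 0 ≤ D t)
    (hineq : ∀ t ∈ Ici a, E' t + κ * D t ≤ g (E t) * D t)
    (hmono : Monotone g) (hg : ContinuousWithinAt g (Ici (E a)) (E a))
    (hsmall : g (E a) ≤ κ - μ) :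
    AntitoneOn E (Ici a) ∧ (∀ t ∈ Ici a, E' t + μ * D t ≤ 0) ∧ ∀ t ∈ Ici a, E t ≤ E a := by
  have bounded : ∀ t ∈ Ici a, E t ≤ E a :=
    le_left_of_deriv_add_mul_le hderiv hD hineq hg (by linarith)
  have dissipation : ∀ t ∈ Ici a, E' t + μ * D t ≤ 0 := fun t ht ↦ by
    have absorbed : g (E t) * D t ≤ (κ - μ) * D t :=
      mul_le_mul_of_nonneg_right ((hmono (bounded t ht)).trans hsmall) (hD t ht)
    linarith [hineq t ht]
  refine ⟨antitoneOn_of_hasDerivWithinAt_nonpos (convex_Ici a)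
    (fun t ht ↦ (hderiv t ht).continuousWithinAt)
    (fun t ht ↦ (hderiv t (interior_subset ht)).mono interior_subset) (fun t ht ↦ ?_),
    dissipation, bounded⟩
  have ht' : t ∈ Ici a := interior_subset ht
  linarith [dissipation t ht', mul_nonneg hμ.le (hD t ht')]

end Absorption

/-- Small-data absorption: if `E' + κ D ≤ C √E · D` with `D ≥ 0` and `C √(E 0) ≤ κ/2`,
then `E` is nonincreasing, `E' + (κ/2) D ≤ 0`, and `E(t) ≤ E(0)` for all `t ≥ 0`. -/
theorem small_data_absorption
    (κ C : ℝ) (hκ : 0 < κ) (hC : 0 ≤ C)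
    (E E' D : ℝ → ℝ)
    (hderiv : ∀ t ∈ Set.Ici (0 : ℝ), HasDerivWithinAt E (E' t) (Set.Ici 0) t)
    (hEpos : ∀ t ∈ Set.Ici (0 : ℝ), 0 ≤ E t)
    (hDpos : ∀ t ∈ Set.Ici (0 : ℝ), 0 ≤ D t)
    (hineq : ∀ t ∈ Set.Ici (0 : ℝ), E' t + κ * D t ≤ C * Real.sqrt (E t) * D t)
    (hsmall : C * Real.sqrt (E 0) ≤ κ / 2) :
    AntitoneOn E (Set.Ici 0) ∧
    (∀ t ∈ Set.Ici (0 : ℝ), E' t + (κ / 2) * D t ≤ 0) ∧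
    (∀ t ∈ Set.Ici (0 : ℝ), E t ≤ E 0) :=
  small_data_absorption_general (g := fun s ↦ C * √s) (half_pos hκ) hderiv hDpos hineq
    (Real.sqrt_monotone.const_mul hC) (by fun_prop) (by linarith)
end

section
/- Let κ > 0, c₀ > 0, C₁ ≥ 0 and C₂ ≥ 0. Let E : [0,∞) → ℝ be differentiable with E(t) ≥ 0 for all t and E(0) > 0, and let D : [0,∞) → ℝ satisfy D(t) ≥ c₀·E(t) for all t. Assume E'(t) + κ·D(t) ≤ C₁·E(t)^{3/2} + C₂·√(E(t))·D(t) for all t ≥ 0, together with the smallness conditions 2·C₂·√(E(0)) ≤ κ/2 and 2·C₁·√(E(0)) ≤ (κ·c₀)/4. Then E is nonincreasing on [0,∞); in particular E(t) ≤ E(0) ≤ 4·E(0) for all t ≥ 0. -/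
/-!
At energy `e` and dissipation `d ≥ c₀ e` the right-hand side is `(C₁√e) e + (C₂√e) d`, which `κ d`
dominates as soon as `(C₁ + c₀ C₂) √e ≤ κ c₀`. Smallness of the data makes this strict at time `0`,
so it persists at every energy below some `M > E 0`: the energy cannot grow while it is below `M`.
A function starting below `M` that cannot grow while below `M` never reaches `M`, because it stays
under a line of small positive slope; hence it never grows.
-/

section RightDerivative

open Set

variable {f f' : ℝ → ℝ} {a M : ℝ}

theorem antitoneOn_Ici_of_hasDerivWithinAt_right_nonpos (hf : ContinuousOn f (Ici a))
    (hf' : ∀ t ∈ Ici a, HasDerivWithinAt f (f' t) (Ici t) t) (hnonpos : ∀ t ∈ Ici a, f' t ≤ 0) :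
    AntitoneOn f (Ici a) := by
  intro s hs t _ hst
  have hsub : Ici s ⊆ Ici a := Ici_subset_Ici.2 hs
  exact image_le_of_deriv_right_le_deriv_boundary (B := fun _ ↦ f s) (B' := fun _ ↦ 0)
    (hf.mono (Icc_subset_Ici_self.trans hsub)) (fun x hx ↦ hf' x (hsub hx.1)) le_rfl
    continuousOn_const (fun _ _ ↦ hasDerivWithinAt_const _ _ _)
    (fun x hx ↦ hnonpos x (hsub hx.1)) (right_mem_Icc.2 hst)

theorem lt_of_hasDerivWithinAt_right_nonpos_of_lt (hf : ContinuousOn f (Ici a))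
    (hf' : ∀ t ∈ Ici a, HasDerivWithinAt f (f' t) (Ici t) t) (ha : f a < M)
    (hnonpos : ∀ t ∈ Ici a, f t < M → f' t ≤ 0) {t : ℝ} (ht : t ∈ Ici a) : f t < M := by
  obtain ⟨ε, hε, hεM⟩ : ∃ ε > 0, (t - a) * ε < M - f a := exists_pos_mul_lt (sub_pos.2 ha) _
  let line : ℝ → ℝ := fun x ↦ f a + (x - a) * ε
  have hline : ∀ x, HasDerivAt line ε x := fun x ↦ by
    simpa only [one_mul] using (((hasDerivAt_id' x).sub_const a).mul_const ε).const_add (f a)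
  have hline_lt : ∀ x ≤ t, line x < M := fun x hx ↦
    calc line x ≤ line t := by simp only [line]; gcongr
      _ < M := by simp only [line]; linarith
  have hft : f t ≤ line t :=
    image_le_of_deriv_right_lt_deriv_boundary (hf.mono Icc_subset_Ici_self)
      (fun x hx ↦ hf' x hx.1) (by simp [line]) hline
      (fun x hx hfx ↦ (hnonpos x hx.1 (hfx ▸ hline_lt x hx.2.le)).trans_lt hε)
      (right_mem_Icc.2 ht)
  exact hft.trans_lt (hline_lt t le_rfl)

theorem antitoneOn_Ici_of_hasDerivWithinAt_right_nonpos_of_lt (hf : ContinuousOn f (Ici a))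
    (hf' : ∀ t ∈ Ici a, HasDerivWithinAt f (f' t) (Ici t) t) (ha : f a < M)
    (hnonpos : ∀ t ∈ Ici a, f t < M → f' t ≤ 0) : AntitoneOn f (Ici a) :=
  antitoneOn_Ici_of_hasDerivWithinAt_right_nonpos hf hf' fun t ht ↦
    hnonpos t ht (lt_of_hasDerivWithinAt_right_nonpos_of_lt hf hf' ha hnonpos ht)

end RightDerivative

theorem rpow_three_halves_eq_sqrt_mul {x : ℝ} (hx : 0 ≤ x) : x ^ ((3 : ℝ) / 2) = √x * x := by
  rw [show (3 : ℝ) / 2 = 1 / 2 + 1 by norm_num, Real.rpow_add_one' hx (by norm_num),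
    Real.sqrt_eq_rpow]

theorem nonpos_of_dissipation_absorbs {κ c A B e e' d : ℝ} (hc : 0 < c) (hA : 0 ≤ A) (he : 0 ≤ e)
    (hd : c * e ≤ d) (hineq : e' + κ * d ≤ A * e + B * d) (habsorb : A + c * B ≤ κ * c) :
    e' ≤ 0 := by
  have hB : B ≤ κ := le_of_mul_le_mul_left (by linarith) hc
  calc e' ≤ A * e - (κ - B) * d := by linarith
    _ ≤ A * e - (κ - B) * (c * e) := by gcongr
    _ = (A + c * B - κ * c) * e := by ring
    _ ≤ 0 := mul_nonpos_of_nonpos_of_nonneg (sub_nonpos.2 habsorb) he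

theorem cubic_absorption_global_general {κ c₀ C₁ C₂ : ℝ} (hc₀ : 0 < c₀) (hC₁ : 0 ≤ C₁)
    (hC₂ : 0 ≤ C₂) {E E' D : ℝ → ℝ}
    (hderiv : ∀ t ∈ Set.Ici (0 : ℝ), HasDerivWithinAt E (E' t) (Set.Ici 0) t)
    (hEpos : ∀ t ∈ Set.Ici (0 : ℝ), 0 ≤ E t)
    (hDcoercive : ∀ t ∈ Set.Ici (0 : ℝ), c₀ * E t ≤ D t)
    (hineq : ∀ t ∈ Set.Ici (0 : ℝ),
      E' t + κ * D t ≤ C₁ * E t ^ ((3 : ℝ) / 2) + C₂ * √(E t) * D t)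
    (hsmall : (C₁ + c₀ * C₂) * √(E 0) < κ * c₀) :
    AntitoneOn E (Set.Ici 0) := by
  have hcont : ContinuousAt (fun x ↦ (C₁ + c₀ * C₂) * √x) (E 0) := by fun_prop
  obtain ⟨M, hE0M, hM⟩ := (hcont.eventually_lt_const hsmall).exists_gt
  refine antitoneOn_Ici_of_hasDerivWithinAt_right_nonpos_of_lt
    (fun t ht ↦ (hderiv t ht).continuousWithinAt)
    (fun t ht ↦ (hderiv t ht).mono (Set.Ici_subset_Ici.2 ht)) hE0M fun t ht hEM ↦ ?_
  have habsorb : C₁ * √(E t) + c₀ * (C₂ * √(E t)) ≤ κ * c₀ :=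
    calc C₁ * √(E t) + c₀ * (C₂ * √(E t)) = (C₁ + c₀ * C₂) * √(E t) := by ring
      _ ≤ (C₁ + c₀ * C₂) * √M := by gcongr
      _ ≤ κ * c₀ := hM.le
  have hineq' : E' t + κ * D t ≤ C₁ * √(E t) * E t + C₂ * √(E t) * D t := by
    simpa only [rpow_three_halves_eq_sqrt_mul (hEpos t ht), ← mul_assoc] using hineq t ht
  exact nonpos_of_dissipation_absorbs hc₀ (by positivity) (hEpos t ht) (hDcoercive t ht)
    hineq' habsorb

/-- Bootstrap/absorption for the second unidirectional model: under the smallness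
conditions `2C₂√(E 0) ≤ κ/2` and `2C₁√(E 0) ≤ κc₀/4`, the energy satisfying
`E' + κD ≤ C₁ E^{3/2} + C₂ √E · D` with `D ≥ c₀ E` is nonincreasing, and in
particular `E(t) ≤ E(0) ≤ 4E(0)` for all `t ≥ 0`. -/
theorem cubic_absorption_global
    (κ c₀ C₁ C₂ : ℝ) (hκ : 0 < κ) (hc₀ : 0 < c₀) (hC₁ : 0 ≤ C₁) (hC₂ : 0 ≤ C₂)
    (E E' D : ℝ → ℝ)
    (hderiv : ∀ t ∈ Set.Ici (0 : ℝ), HasDerivWithinAt E (E' t) (Set.Ici 0) t)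
    (hEpos : ∀ t ∈ Set.Ici (0 : ℝ), 0 ≤ E t)
    (hE0 : 0 < E 0)
    (hDcoercive : ∀ t ∈ Set.Ici (0 : ℝ), c₀ * E t ≤ D t)
    (hineq : ∀ t ∈ Set.Ici (0 : ℝ),
      E' t + κ * D t ≤ C₁ * E t ^ ((3 : ℝ) / 2) + C₂ * Real.sqrt (E t) * D t)
    (hsmall₂ : 2 * C₂ * Real.sqrt (E 0) ≤ κ / 2)
    (hsmall₁ : 2 * C₁ * Real.sqrt (E 0) ≤ κ * c₀ / 4) :
    AntitoneOn E (Set.Ici 0) ∧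
    (∀ t ∈ Set.Ici (0 : ℝ), E t ≤ E 0) ∧
    (∀ t ∈ Set.Ici (0 : ℝ), E t ≤ 4 * E 0) := by
  have hsmall : (C₁ + c₀ * C₂) * √(E 0) < κ * c₀ := by nlinarith [mul_pos hκ hc₀]
  have hanti := cubic_absorption_global_general hc₀ hC₁ hC₂ hderiv hEpos hDcoercive hineq hsmall
  have hle : ∀ t ∈ Set.Ici (0 : ℝ), E t ≤ E 0 := fun t ht ↦ hanti Set.self_mem_Ici ht ht
  exact ⟨hanti, hle, fun t ht ↦ by linarith [hle t ht]⟩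
end
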